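/- arXiv:2512.04670 — 2 statements merged into one kernel-verified Lean document; each statement's English description precedes it below -/
import Mathlib

section
/- For every integer n ≥ 1, the function u_n(x,t) = (x/(2√π)) · (d^{n−1}/ds^{n−1})[ s^{−3/2} · exp(−x²/(4s)) ] evaluated at s = t is smooth on the open quarter-plane Q, satisfies the heat equation ∂u_n/∂t = ∂²u_n/∂x² at every point of Q, and satisfies lim_{x→0⁺} u_n(x,t) = 0 for every t > 0 and lim_{t→0⁺} u_n(x,t) = 0 for every x > 0. -/
open MeasureTheory Filter Set

/-- The open quarter-plane `Q = {(x,t) : x > 0, t > 0}`. -/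
def quarterPlane : Set (ℝ × ℝ) := {p | 0 < p.1 ∧ 0 < p.2}

/-- `u_n(x,t) = (x/(2√π)) · (d^{n−1}/ds^{n−1})[ s^{−3/2}·exp(−x²/(4s)) ]|_{s=t}`,
the `(n−1)`-st derivative being taken with respect to the time variable on `(0,∞)`. -/
noncomputable def heatCounterexampleSeq (n : ℕ) : ℝ → ℝ → ℝ := fun x t =>
  x / (2 * Real.sqrt Real.pi) *
    iteratedDerivWithin (n - 1)
      (fun s : ℝ => s ^ (-(3 : ℝ) / 2) * Real.exp (-(x ^ 2) / (4 * s))) (Ioi 0) t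

/-- `w` is smooth on `Q`, satisfies the heat equation `∂w/∂t = ∂²w/∂x²` at every point
of `Q`, and has vanishing boundary limit (as `x → 0⁺`) and initial limit (as `t → 0⁺`). -/
def IsHomogeneousHeatSol (w : ℝ → ℝ → ℝ) : Prop :=
  ContDiffOn ℝ (⊤ : ℕ∞) (fun p : ℝ × ℝ => w p.1 p.2) quarterPlane ∧
  (∀ x t : ℝ, 0 < x → 0 < t →
    deriv (fun s => w x s) t = iteratedDeriv 2 (fun y => w y t) x) ∧
  (∀ t : ℝ, 0 < t → Tendsto (fun x => w x t) (nhdsWithin 0 (Ioi 0)) (nhds 0)) ∧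
  (∀ x : ℝ, 0 < x → Tendsto (fun t => w x t) (nhdsWithin 0 (Ioi 0)) (nhds 0))

/-!
The equation `u_t = u_xx` is linear with constant coefficients, so by symmetry of second
derivatives `∂_t` maps smooth solutions to smooth solutions; hence it suffices to treat `u_1`, which
is `-∂_x` of the Gauss kernel. All `u_n` are thus smooth on the whole half-plane `t > 0` and, having
the factor `x`, vanish at `x = 0`. For the initial limit,
`d/ds (s^a e^{-c/s}) = a s^{a-1} e^{-c/s} + c s^{a-2} e^{-c/s}` shows that every derivative of
`s^a e^{-c/s}` is a linear combination of functions of the same kind, all of which tend to `0` at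
`0⁺` when `c > 0`.
-/

open scoped Topology ContDiff

section DirectionalDerivative

variable {𝕜 E F : Type*} [NontriviallyNormedField 𝕜] [NormedAddCommGroup E] [NormedSpace 𝕜 E]
  [NormedAddCommGroup F] [NormedSpace 𝕜 F]

/-- The directional derivative `∂_v f` as a function of the base point, so that it can be iterated.
It is defined through `fderiv`, hence zero at points where `f` is not Fréchet differentiable. -/
noncomputable def dirDeriv (𝕜 : Type*) {E F : Type*} [NontriviallyNormedField 𝕜]
    [NormedAddCommGroup E] [NormedSpace 𝕜 E] [NormedAddCommGroup F] [NormedSpace 𝕜 F]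
    (v : E) (f : E → F) : E → F :=
  fun p => fderiv 𝕜 f p v

theorem contDiffOn_dirDeriv {f : E → F} {U : Set E} (hU : IsOpen U) (hf : ContDiffOn 𝕜 ∞ f U)
    (v : E) : ContDiffOn 𝕜 ∞ (dirDeriv 𝕜 v f) U :=
  (hf.fderiv_of_isOpen hU le_rfl).clm_apply contDiffOn_const

theorem dirDeriv_congr {f g : E → F} {U : Set E} (hU : IsOpen U) (hfg : EqOn f g U) (v : E) :
    EqOn (dirDeriv 𝕜 v f) (dirDeriv 𝕜 v g) U := fun _ hp => by
  simp only [dirDeriv, (hfg.eventuallyEq_of_mem (hU.mem_nhds hp)).fderiv_eq]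

theorem differentiableAt_fderiv {f : E → F} {p : E} (hf : ContDiffAt 𝕜 2 f p) :
    DifferentiableAt 𝕜 (fderiv 𝕜 f) p :=
  (hf.fderiv_right (m := 1) (by norm_num)).differentiableAt one_ne_zero

theorem dirDeriv_comm [IsRCLikeNormedField 𝕜] {f : E → F} {p : E} (hf : ContDiffAt 𝕜 2 f p)
    (v w : E) : dirDeriv 𝕜 w (dirDeriv 𝕜 v f) p = dirDeriv 𝕜 v (dirDeriv 𝕜 w f) p := by
  have dirDeriv_dirDeriv (a b : E) :
      dirDeriv 𝕜 b (dirDeriv 𝕜 a f) p = fderiv 𝕜 (fderiv 𝕜 f) p b a := by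
    unfold dirDeriv
    simp [fderiv_clm_apply (differentiableAt_fderiv hf) (differentiableAt_const a)]
  rw [dirDeriv_dirDeriv, dirDeriv_dirDeriv]
  exact hf.isSymmSndFDerivAt minSmoothness_of_isRCLikeNormedField.le w v

theorem deriv_slice_fst {f : 𝕜 × E → F} {p : 𝕜 × E} (hf : DifferentiableAt 𝕜 f p) :
    deriv (fun y => f (y, p.2)) p.1 = dirDeriv 𝕜 (1, 0) f p :=
  (hf.hasFDerivAt.comp_hasDerivAt p.1
    ((hasDerivAt_id p.1).prodMk (hasDerivAt_const p.1 p.2))).deriv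

theorem deriv_slice_snd {f : E × 𝕜 → F} {p : E × 𝕜} (hf : DifferentiableAt 𝕜 f p) :
    deriv (fun s => f (p.1, s)) p.2 = dirDeriv 𝕜 (0, 1) f p :=
  (hf.hasFDerivAt.comp_hasDerivAt p.2
    ((hasDerivAt_const p.2 p.1).prodMk (hasDerivAt_id p.2))).deriv

theorem iteratedDeriv_two_slice_fst {f : 𝕜 × E → F} {p : 𝕜 × E} (hf : ContDiffAt 𝕜 2 f p) :
    iteratedDeriv 2 (fun y => f (y, p.2)) p.1 =
      dirDeriv 𝕜 (1, 0) (dirDeriv 𝕜 (1, 0) f) p := by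
  have hslice : Tendsto (fun y => (y, p.2)) (𝓝 p.1) (𝓝 p) :=
    (Continuous.prodMk_left p.2).tendsto p.1
  have hdiff : ∀ᶠ q in 𝓝 p, DifferentiableAt 𝕜 f q :=
    (hf.eventually (by simp)).mono fun q hq => hq.differentiableAt two_ne_zero
  have hfirst : deriv (fun y => f (y, p.2)) =ᶠ[𝓝 p.1] fun y => dirDeriv 𝕜 (1, 0) f (y, p.2) :=
    (hslice.eventually hdiff).mono fun y hy => deriv_slice_fst hy
  rw [iteratedDeriv_succ, iteratedDeriv_one, hfirst.deriv_eq]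
  exact deriv_slice_fst ((differentiableAt_fderiv hf).clm_apply (differentiableAt_const _))

end DirectionalDerivative

/-- `u` is a smooth solution on `U` of the one-dimensional heat equation `∂u/∂t = ∂²u/∂x²`, where
points are written `(x, t)`. -/
structure IsHeatSolOn {F : Type*} [NormedAddCommGroup F] [NormedSpace ℝ F]
    (u : ℝ × ℝ → F) (U : Set (ℝ × ℝ)) : Prop where
  contDiffOn : ContDiffOn ℝ ∞ u U
  deriv_eq : ∀ p ∈ U,
    deriv (fun s => u (p.1, s)) p.2 = iteratedDeriv 2 (fun y => u (y, p.2)) p.1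

section HeatEquation

variable {F : Type*} [NormedAddCommGroup F] [NormedSpace ℝ F] {u v : ℝ × ℝ → F}
  {U : Set (ℝ × ℝ)}

theorem isHeatSolOn_iff_dirDeriv (hU : IsOpen U) :
    IsHeatSolOn u U ↔ ContDiffOn ℝ ∞ u U ∧
      EqOn (dirDeriv ℝ (0, 1) u) (dirDeriv ℝ (1, 0) (dirDeriv ℝ (1, 0) u)) U := by
  have slices (hu : ContDiffOn ℝ ∞ u U) {p : ℝ × ℝ} (hp : p ∈ U) :
      deriv (fun s => u (p.1, s)) p.2 = dirDeriv ℝ (0, 1) u p ∧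
        iteratedDeriv 2 (fun y => u (y, p.2)) p.1 =
          dirDeriv ℝ (1, 0) (dirDeriv ℝ (1, 0) u) p := by
    have hup := hu.contDiffAt (hU.mem_nhds hp)
    exact ⟨deriv_slice_snd (hup.differentiableAt (by simp)),
      iteratedDeriv_two_slice_fst (contDiffAt_infty.mp hup 2)⟩
  constructor
  · rintro ⟨hu, heat⟩
    refine ⟨hu, fun p hp => ?_⟩
    rw [← (slices hu hp).1, ← (slices hu hp).2, heat p hp]
  · rintro ⟨hu, heat⟩
    refine ⟨hu, fun p hp => ?_⟩
    rw [(slices hu hp).1, (slices hu hp).2, heat hp]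

namespace IsHeatSolOn

theorem congr (hU : IsOpen U) (hu : IsHeatSolOn u U) (hvu : EqOn v u U) : IsHeatSolOn v U := by
  rw [isHeatSolOn_iff_dirDeriv hU] at hu ⊢
  refine ⟨hu.1.congr hvu, ((dirDeriv_congr hU hvu _).trans hu.2).trans ?_⟩
  exact dirDeriv_congr hU (dirDeriv_congr hU hvu.symm _) _

theorem dirDeriv_apply (hU : IsOpen U) (hu : IsHeatSolOn u U) (w : ℝ × ℝ) :
    IsHeatSolOn (dirDeriv ℝ w u) U := by
  rw [isHeatSolOn_iff_dirDeriv hU] at hu ⊢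
  obtain ⟨hsmooth, heat⟩ := hu
  have hcomm {f : ℝ × ℝ → F} (hf : ContDiffOn ℝ ∞ f U) (a b : ℝ × ℝ) :
      EqOn (dirDeriv ℝ b (dirDeriv ℝ a f)) (dirDeriv ℝ a (dirDeriv ℝ b f)) U :=
    fun p hp => dirDeriv_comm (contDiffAt_infty.mp (hf.contDiffAt (hU.mem_nhds hp)) 2) a b
  refine ⟨contDiffOn_dirDeriv hU hsmooth w, fun p hp => ?_⟩
  calc dirDeriv ℝ (0, 1) (dirDeriv ℝ w u) p
    _ = dirDeriv ℝ w (dirDeriv ℝ (0, 1) u) p := hcomm hsmooth _ _ hp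
    _ = dirDeriv ℝ w (dirDeriv ℝ (1, 0) (dirDeriv ℝ (1, 0) u)) p := dirDeriv_congr hU heat _ hp
    _ = dirDeriv ℝ (1, 0) (dirDeriv ℝ w (dirDeriv ℝ (1, 0) u)) p :=
      hcomm (contDiffOn_dirDeriv hU hsmooth _) _ _ hp
    _ = dirDeriv ℝ (1, 0) (dirDeriv ℝ (1, 0) (dirDeriv ℝ w u)) p :=
      dirDeriv_congr hU (hcomm hsmooth _ _) _ hp

theorem deriv_time (hU : IsOpen U) (hu : IsHeatSolOn u U) :
    IsHeatSolOn (fun p => deriv (fun s => u (p.1, s)) p.2) U :=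
  (hu.dirDeriv_apply hU (0, 1)).congr hU fun _ hp =>
    deriv_slice_snd ((hu.contDiffOn.contDiffAt (hU.mem_nhds hp)).differentiableAt (by simp))

theorem iteratedDeriv_time (hU : IsOpen U) (hu : IsHeatSolOn u U) (k : ℕ) :
    IsHeatSolOn (fun p => iteratedDeriv k (fun s => u (p.1, s)) p.2) U := by
  induction k with
  | zero => simpa only [iteratedDeriv_zero] using hu
  | succ k ih => simpa only [iteratedDeriv_succ] using ih.deriv_time hU

end IsHeatSolOn

end HeatEquation

section InitialLimit

theorem tendsto_rpow_mul_exp_neg_div_nhdsGT_zero (a : ℝ) {c : ℝ} (hc : 0 < c) :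
    Tendsto (fun s : ℝ => s ^ a * Real.exp (-c / s)) (𝓝[>] 0) (𝓝 0) := by
  refine ((tendsto_rpow_mul_exp_neg_mul_atTop_nhds_zero (-a) c hc).comp
    tendsto_inv_nhdsGT_zero).congr' ?_
  filter_upwards [self_mem_nhdsWithin] with s (hs : 0 < s)
  simp [Real.inv_rpow hs.le, Real.rpow_neg hs.le, div_eq_mul_inv]

theorem hasDerivAt_rpow_mul_exp_neg_div (a c : ℝ) {s : ℝ} (hs : 0 < s) :
    HasDerivAt (fun s : ℝ => s ^ a * Real.exp (-c / s))
      (a * (s ^ (a - 1) * Real.exp (-c / s)) + c * (s ^ (a - 2) * Real.exp (-c / s))) s := by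
  have hdiv : HasDerivAt (fun s : ℝ => -c / s) (c / s ^ 2) s := by
    simpa [div_eq_mul_inv] using (hasDerivAt_inv hs.ne').const_mul (-c)
  refine ((Real.hasDerivAt_rpow_const (p := a) (.inl hs.ne')).mul hdiv.exp).congr_deriv ?_
  rw [Real.rpow_sub hs a 2, Real.rpow_two]
  ring

theorem contDiffOn_rpow_mul_exp_neg_div (a c : ℝ) :
    ContDiffOn ℝ ∞ (fun s : ℝ => s ^ a * Real.exp (-c / s)) (Ioi 0) := by
  have hne (s : ℝ) (hs : s ∈ Ioi 0) : s ≠ 0 := ne_of_gt hs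
  exact (contDiffOn_id.rpow_const_of_ne hne).mul (contDiffOn_const.div contDiffOn_id hne).exp

theorem tendsto_iteratedDerivWithin_rpow_mul_exp_neg_div (k : ℕ) (a : ℝ) {c : ℝ} (hc : 0 < c) :
    Tendsto (iteratedDerivWithin k (fun s : ℝ => s ^ a * Real.exp (-c / s)) (Ioi 0))
      (𝓝[>] 0) (𝓝 0) := by
  induction k generalizing a with
  | zero =>
    simpa only [iteratedDerivWithin_zero] using tendsto_rpow_mul_exp_neg_div_nhdsGT_zero a hc
  | succ k ih =>
    have hderiv : EqOn (derivWithin (fun s : ℝ => s ^ a * Real.exp (-c / s)) (Ioi 0))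
        (fun s => a * (s ^ (a - 1) * Real.exp (-c / s)) + c * (s ^ (a - 2) * Real.exp (-c / s)))
        (Ioi 0) := fun s hs =>
      (hasDerivAt_rpow_mul_exp_neg_div a c hs).hasDerivWithinAt.derivWithin
        (uniqueDiffOn_Ioi 0 s hs)
    have hsmooth (r b : ℝ) {s : ℝ} (hs : s ∈ Ioi 0) :
        ContDiffWithinAt ℝ k (fun s : ℝ => r * (s ^ b * Real.exp (-c / s))) (Ioi 0) s :=
      ((contDiffOn_const.mul (contDiffOn_rpow_mul_exp_neg_div b c)) s hs).of_le
        (mod_cast le_top)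
    have hlim := ((ih (a - 1)).const_mul a).add ((ih (a - 2)).const_mul c)
    rw [mul_zero, mul_zero, add_zero] at hlim
    refine hlim.congr' ?_
    filter_upwards [self_mem_nhdsWithin] with s hs
    rw [iteratedDerivWithin_succ', iteratedDerivWithin_congr hderiv hs,
      iteratedDerivWithin_fun_add hs (uniqueDiffOn_Ioi 0) (hsmooth a _ hs) (hsmooth c _ hs),
      iteratedDerivWithin_const_mul_field, iteratedDerivWithin_const_mul_field]

end InitialLimit

section HeatDipole

/-- The heat dipole `x / (2√π) · t^{-3/2} · exp(-x²/(4t))`, i.e. `-∂_x` of the Gauss kernel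
`(4πt)^{-1/2} · exp(-x²/(4t))`, as a function of the pair `(x, t)`. -/
noncomputable def heatDipole (p : ℝ × ℝ) : ℝ :=
  p.1 / (2 * Real.sqrt Real.pi) * (p.2 ^ (-(3 : ℝ) / 2) * Real.exp (-(p.1 ^ 2) / (4 * p.2)))

theorem isOpen_setOf_snd_pos : IsOpen {p : ℝ × ℝ | 0 < p.2} :=
  isOpen_lt continuous_const continuous_snd

theorem contDiffOn_heatDipole : ContDiffOn ℝ ∞ heatDipole {p | 0 < p.2} := by
  have hne (p : ℝ × ℝ) (hp : p ∈ {p : ℝ × ℝ | 0 < p.2}) : p.2 ≠ 0 := ne_of_gt hp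
  have hpow : ContDiffOn ℝ ∞ (fun p : ℝ × ℝ => p.2 ^ (-(3 : ℝ) / 2)) {p | 0 < p.2} :=
    contDiff_snd.contDiffOn.rpow_const_of_ne hne
  have hexponent : ContDiffOn ℝ ∞ (fun p : ℝ × ℝ => -(p.1 ^ 2) / (4 * p.2)) {p | 0 < p.2} :=
    (contDiff_fst.pow 2).neg.contDiffOn.div (contDiff_const.mul contDiff_snd).contDiffOn
      fun p hp => mul_ne_zero four_ne_zero (hne p hp)
  exact (contDiff_fst.div_const _).contDiffOn.mul (hpow.mul hexponent.exp)

theorem hasDerivAt_heatDipole_snd (x : ℝ) {t : ℝ} (ht : 0 < t) :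
    HasDerivAt (fun s => heatDipole (x, s))
      (heatDipole (x, t) * (x ^ 2 / (4 * t ^ 2) - 3 / (2 * t))) t := by
  have hform : (fun s => heatDipole (x, s)) = fun s =>
      x / (2 * Real.sqrt Real.pi) * (s ^ (-(3 : ℝ) / 2) * Real.exp (-(x ^ 2 / 4) / s)) := by
    simp only [heatDipole, neg_div, div_div]
  rw [hform]
  refine ((hasDerivAt_rpow_mul_exp_neg_div _ (x ^ 2 / 4) ht).const_mul _).congr_deriv ?_
  rw [congrFun hform t, Real.rpow_sub_one ht.ne', Real.rpow_sub ht _ 2, Real.rpow_two]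
  field_simp
  ring

theorem hasDerivAt_exp_neg_sq_div (t x : ℝ) :
    HasDerivAt (fun y => Real.exp (-(y ^ 2) / (4 * t)))
      (Real.exp (-(x ^ 2) / (4 * t)) * (-x / (2 * t))) x := by
  refine ((hasDerivAt_pow 2 x).neg.div_const (4 * t)).exp.congr_deriv ?_
  norm_num
  ring

theorem iteratedDeriv_two_heatDipole_fst (x : ℝ) {t : ℝ} (ht : 0 < t) :
    iteratedDeriv 2 (fun y => heatDipole (y, t)) x =
      heatDipole (x, t) * (x ^ 2 / (4 * t ^ 2) - 3 / (2 * t)) := by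
  have hfirst : deriv (fun y => heatDipole (y, t)) = fun y =>
      t ^ (-(3 : ℝ) / 2) / (2 * Real.sqrt Real.pi) *
        ((1 - y ^ 2 / (2 * t)) * Real.exp (-(y ^ 2) / (4 * t))) := by
    funext y
    have h : HasDerivAt (fun y => heatDipole (y, t)) _ y :=
      ((hasDerivAt_id y).div_const (2 * Real.sqrt Real.pi)).mul
        ((hasDerivAt_exp_neg_sq_div t y).const_mul (t ^ (-(3 : ℝ) / 2)))
    rw [h.deriv, id]
    ring
  have hfactor : HasDerivAt (fun y : ℝ => 1 - y ^ 2 / (2 * t)) (-(x / t)) x := by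
    refine (((hasDerivAt_pow 2 x).div_const (2 * t)).const_sub 1).congr_deriv ?_
    norm_num
    field_simp
  have hsecond := (hfactor.fun_mul (hasDerivAt_exp_neg_sq_div t x)).const_mul
    (t ^ (-(3 : ℝ) / 2) / (2 * Real.sqrt Real.pi))
  rw [iteratedDeriv_succ, iteratedDeriv_one, hfirst, hsecond.deriv, heatDipole]
  field_simp
  ring

theorem isHeatSolOn_heatDipole : IsHeatSolOn heatDipole {p | 0 < p.2} where
  contDiffOn := contDiffOn_heatDipole
  deriv_eq p hp :=
    (hasDerivAt_heatDipole_snd p.1 hp).deriv.trans (iteratedDeriv_two_heatDipole_fst p.1 hp).symm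

end HeatDipole

section HeatCounterexampleSeq

theorem heatCounterexampleSeq_eq_iteratedDeriv_heatDipole (n : ℕ) (x : ℝ) {t : ℝ} (ht : 0 < t) :
    heatCounterexampleSeq n x t = iteratedDeriv (n - 1) (fun s => heatDipole (x, s)) t := by
  simp only [heatCounterexampleSeq, heatDipole, iteratedDeriv_const_mul_field,
    iteratedDerivWithin_of_isOpen isOpen_Ioi (mem_Ioi.mpr ht)]

theorem isHeatSolOn_heatCounterexampleSeq (n : ℕ) :
    IsHeatSolOn (fun p => heatCounterexampleSeq n p.1 p.2) {p | 0 < p.2} :=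
  (isHeatSolOn_heatDipole.iteratedDeriv_time isOpen_setOf_snd_pos (n - 1)).congr
    isOpen_setOf_snd_pos fun p hp => heatCounterexampleSeq_eq_iteratedDeriv_heatDipole n p.1 hp

theorem tendsto_heatCounterexampleSeq_fst (n : ℕ) {t : ℝ} (ht : 0 < t) :
    Tendsto (fun x => heatCounterexampleSeq n x t) (𝓝 0) (𝓝 0) := by
  have hcont : Continuous fun x => heatCounterexampleSeq n x t :=
    (isHeatSolOn_heatCounterexampleSeq n).contDiffOn.continuousOn.comp_continuous
      (Continuous.prodMk_left t) fun _ => ht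
  simpa [heatCounterexampleSeq] using hcont.tendsto 0

theorem tendsto_heatCounterexampleSeq_snd (n : ℕ) {x : ℝ} (hx : x ≠ 0) :
    Tendsto (heatCounterexampleSeq n x) (𝓝[>] 0) (𝓝 0) := by
  have hlim := (tendsto_iteratedDerivWithin_rpow_mul_exp_neg_div (n - 1) (-3 / 2)
    (show 0 < x ^ 2 / 4 by positivity)).const_mul (x / (2 * Real.sqrt Real.pi))
  unfold heatCounterexampleSeq
  simpa only [mul_zero, neg_div, div_div] using hlim

end HeatCounterexampleSeq

theorem heat_counterexample_sequence (n : ℕ) (hn : 1 ≤ n) :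
    IsHomogeneousHeatSol (heatCounterexampleSeq n) := by
  have hsol := isHeatSolOn_heatCounterexampleSeq n
  refine ⟨?smooth, ?heat, ?boundary, ?initial⟩
  case smooth => exact hsol.contDiffOn.mono fun p hp => hp.2
  case heat => exact fun x t _ ht => hsol.deriv_eq (x, t) ht
  case boundary =>
    exact fun t ht => (tendsto_heatCounterexampleSeq_fst n ht).mono_left nhdsWithin_le_nhds
  case initial => exact fun x hx => tendsto_heatCounterexampleSeq_snd n hx.ne'
end

section
/- The function v(x,t) = (i/π) · lim_{R→∞} ∫_{−R}^{R} exp(iλx) · (exp(−λ²t) − 1) · λ^{−1} dλ is well defined on the open quarter-plane Q (the symmetric limit exists), is smooth on Q, satisfies the heat equation ∂v/∂t = ∂²v/∂x² at every point of Q, and satisfies lim_{x→0⁺} v(x,t) = 1 for every t > 0 and lim_{t→0⁺} v(x,t) = 0 for every x > 0. -/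
open MeasureTheory Filter Set

/-! The integral is `i ∫ x sinc(λx) (exp(-λ²t) - 1) dλ`, because the even factor `cos(λx)` meets the
odd factor `(exp(-λ²t) - 1)/λ`. Its second half is the Dirichlet integral, with limit `π`. In the
first half write `x sinc(λx) = ∫₀ˣ cos(λy) dy`: the Fourier transform of the Gaussian turns it into
`2π` times the integral of the heat kernel over `[0, x]`, which is `π (1 - erfc(x/(2√t)))`. Hence
`v(x,t) = erfc(x/(2√t))`, and the heat equation reads `∂ₜv = (x/t) K = -2 ∂ₓK = ∂ₓ²v` for the heat
kernel `K`. -/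

open Real Topology

section IntervalIntegral

variable {E : Type*} [NormedAddCommGroup E] [NormedSpace ℝ E]

theorem intervalIntegral_swap_of_continuous {f : ℝ → ℝ → E} (hf : Continuous f.uncurry)
    (a b c d : ℝ) : ∫ x in a..b, ∫ y in c..d, f x y = ∫ y in c..d, ∫ x in a..b, f x y :=
  intervalIntegral_intervalIntegral_swap <|
    (hf.continuousOn.integrableOn_compact (isCompact_uIcc.prod isCompact_uIcc)).mono_set <|
      prod_mono uIoc_subset_uIcc uIoc_subset_uIcc

theorem intervalIntegral_eq_zero_of_odd {f : ℝ → E} (hf : f.Odd) (a : ℝ) :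
    ∫ x in -a..a, f x = 0 := by
  have h : ∫ x in -a..a, f (-x) = ∫ x in -a..a, f x := by
    rw [intervalIntegral.integral_comp_neg, neg_neg]
  simp only [hf _, intervalIntegral.integral_neg] at h
  have : IsAddTorsionFree E := .of_isTorsionFree ℝ E
  exact neg_eq_self.1 h

theorem intervalIntegral_eq_two_smul_of_even {f : ℝ → E} (hf : f.Even) {a : ℝ}
    (hint : IntervalIntegrable f volume 0 a) :
    ∫ x in -a..a, f x = (2 : ℝ) • ∫ x in 0..a, f x := by
  have hint_neg : IntervalIntegrable f volume (-a) 0 := by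
    simpa [hf _] using ((IntervalIntegrable.iff_comp_neg).1 hint).symm
  have h : ∫ x in -a..0, f x = ∫ x in 0..a, f x := by
    simpa [hf _] using (intervalIntegral.integral_comp_neg (a := 0) (b := a) f).symm
  rw [← intervalIntegral.integral_add_adjacent_intervals hint_neg hint, h, two_smul]

theorem intervalIntegral_cexp_mul_of_odd {k : ℝ → ℂ} (hk : k.Odd) {a : ℝ}
    (hint : IntervalIntegrable k volume (-a) a) (x : ℝ) :
    ∫ l in -a..a, Complex.exp (Complex.I * l * x) * k l =
      Complex.I * ∫ l in -a..a, (sin (l * x) : ℂ) * k l := by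
  have h_euler (l : ℝ) : Complex.exp (Complex.I * l * x) * k l =
      (cos (l * x) : ℂ) * k l + Complex.I * ((sin (l * x) : ℂ) * k l) := by
    rw [show Complex.I * l * x = ((l * x : ℝ) : ℂ) * Complex.I by push_cast; ring,
      Complex.exp_mul_I, ← Complex.ofReal_cos, ← Complex.ofReal_sin]
    ring
  have h_odd : (fun l : ℝ => (cos (l * x) : ℂ) * k l).Odd := fun l => by simp [hk l]
  simp only [h_euler]
  rw [intervalIntegral.integral_add (hint.continuousOn_mul (by fun_prop))
      ((hint.continuousOn_mul (by fun_prop)).const_mul _),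
    intervalIntegral_eq_zero_of_odd h_odd, zero_add, intervalIntegral.integral_const_mul]

end IntervalIntegral

attribute [local fun_prop] continuous_sinc

section DirichletIntegral

theorem integral_exp_neg_mul {a : ℝ} (ha : a ≠ 0) (T : ℝ) :
    ∫ s in 0..T, exp (-(a * s)) = (1 - exp (-(a * T))) / a := by
  simp only [← neg_mul]
  rw [intervalIntegral.integral_comp_mul_left (fun s => exp s) (neg_ne_zero.2 ha), integral_exp,
    mul_zero, exp_zero, smul_eq_mul]
  field_simp
  ring

theorem integral_exp_neg_mul_le {a : ℝ} (ha : 0 < a) (T : ℝ) :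
    ∫ s in 0..T, exp (-(a * s)) ≤ 1 / a := by
  rw [integral_exp_neg_mul ha.ne']
  gcongr
  linarith [exp_pos (-(a * T))]

theorem abs_integral_mul_exp_neg_mul_le {f : ℝ → ℝ} {a T : ℝ} (hT : 0 ≤ T) (ha : 0 < a)
    (hf : ∀ s, |f s| ≤ 1) : |∫ s in 0..T, f s * exp (-(a * s))| ≤ 1 / a := by
  rw [← Real.norm_eq_abs]
  refine (intervalIntegral.norm_integral_le_of_norm_le hT (.of_forall fun s _ => ?_)
    (Continuous.intervalIntegrable (by fun_prop) _ _)).trans (integral_exp_neg_mul_le ha T)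
  rw [norm_mul, Real.norm_eq_abs, Real.norm_eq_abs, abs_exp]
  exact mul_le_of_le_one_left (exp_pos _).le (hf s)

theorem integral_sin_mul_exp_neg_mul_right (l T : ℝ) :
    ∫ s in 0..T, sin l * exp (-(l * s)) = sinc l - sinc l * exp (-(T * l)) := by
  rcases eq_or_ne l 0 with rfl | hl
  · simp
  rw [intervalIntegral.integral_const_mul, integral_exp_neg_mul hl, sinc_of_ne_zero hl,
    mul_comm T l]
  ring

theorem integral_sin_mul_exp_neg_mul_left (s R : ℝ) :
    ∫ l in 0..R, sin l * exp (-(l * s)) =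
      1 / (1 + s ^ 2) - (cos R + s * sin R) / (1 + s ^ 2) * exp (-(R * s)) := by
  have hs : 1 + s ^ 2 ≠ 0 := by positivity
  have h_deriv (l : ℝ) : HasDerivAt
      (fun l => -(exp (-(l * s)) * (cos l + s * sin l)) / (1 + s ^ 2))
      (sin l * exp (-(l * s))) l := by
    refine ((((hasDerivAt_mul_const s).neg.exp.mul ((hasDerivAt_cos l).add
      ((hasDerivAt_sin l).const_mul s))).neg).div_const (1 + s ^ 2)).congr_deriv ?_
    simp only [Pi.neg_apply, Pi.add_apply]
    field_simp
    ring
  rw [intervalIntegral.integral_eq_sub_of_hasDerivAt (fun l _ => h_deriv l)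
    (Continuous.intervalIntegrable (by fun_prop) _ _)]
  simp only [zero_mul, neg_zero, exp_zero, cos_zero, sin_zero, mul_zero, add_zero, mul_one]
  ring

theorem abs_cos_add_mul_sin_div_le_one (R s : ℝ) : |(cos R + s * sin R) / (1 + s ^ 2)| ≤ 1 := by
  have h_pos : 0 < 1 + s ^ 2 := by positivity
  have h_sq : (cos R + s * sin R) ^ 2 ≤ (1 + s ^ 2) ^ 2 := by
    nlinarith [sq_nonneg (s * cos R - sin R), sin_sq_add_cos_sq R, sq_nonneg s, sq_nonneg (s ^ 2)]
  rw [abs_div, abs_of_pos h_pos, div_le_one h_pos]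
  exact abs_le_of_sq_le_sq h_sq h_pos.le

/-- Integrate `sin l * exp (-l s)` over the rectangle `[0, R] × [0, T]` in both orders. -/
theorem integral_sinc_sub_arctan (R T : ℝ) :
    (∫ l in 0..R, sinc l) - arctan T = (∫ l in 0..R, sinc l * exp (-(T * l))) -
      ∫ s in 0..T, (cos R + s * sin R) / (1 + s ^ 2) * exp (-(R * s)) := by
  have h_swap := intervalIntegral_swap_of_continuous (f := fun l s => sin l * exp (-(l * s)))
    (by unfold Function.uncurry; fun_prop) 0 R 0 T
  have h_ne (s : ℝ) : 1 + s ^ 2 ≠ 0 := by positivity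
  simp only [integral_sin_mul_exp_neg_mul_right, integral_sin_mul_exp_neg_mul_left] at h_swap
  rw [intervalIntegral.integral_sub (Continuous.intervalIntegrable (by fun_prop) _ _)
      (Continuous.intervalIntegrable (by fun_prop) _ _),
    intervalIntegral.integral_sub
      (Continuous.intervalIntegrable (by fun_prop (disch := exact h_ne _)) _ _)
      (Continuous.intervalIntegrable (by fun_prop (disch := exact h_ne _)) _ _),
    integral_one_div_one_add_sq, arctan_zero, sub_zero] at h_swap
  linarith

theorem abs_integral_sinc_sub_arctan_le {R : ℝ} (hR : 0 < R) :
    |(∫ l in 0..R, sinc l) - arctan R| ≤ 2 / R := by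
  rw [integral_sinc_sub_arctan]
  calc _ ≤ 1 / R + 1 / R := (abs_sub _ _).trans <| add_le_add
        (abs_integral_mul_exp_neg_mul_le hR.le hR abs_sinc_le_one)
        (abs_integral_mul_exp_neg_mul_le hR.le hR (abs_cos_add_mul_sin_div_le_one R))
    _ = 2 / R := by ring

theorem tendsto_integral_sinc_atTop :
    Tendsto (fun R : ℝ => ∫ l in 0..R, sinc l) atTop (𝓝 (π / 2)) := by
  have h_diff : Tendsto (fun R : ℝ => (∫ l in 0..R, sinc l) - arctan R) atTop (𝓝 0) := by
    refine squeeze_zero_norm' (a := fun R => 2 / R) ?_ (tendsto_const_nhds.div_atTop tendsto_id)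
    filter_upwards [eventually_gt_atTop 0] with R hR using abs_integral_sinc_sub_arctan_le hR
  simpa using h_diff.add (tendsto_arctan_atTop.mono_right nhdsWithin_le_nhds)

theorem tendsto_integral_mul_sinc_mul_atTop {x : ℝ} (hx : 0 < x) :
    Tendsto (fun R : ℝ => ∫ l in -R..R, x * sinc (l * x)) atTop (𝓝 π) := by
  have h_eq (R : ℝ) : ∫ l in -R..R, x * sinc (l * x) = 2 * ∫ l in 0..R * x, sinc l := by
    rw [intervalIntegral.integral_const_mul, intervalIntegral.mul_integral_comp_mul_right,
      neg_mul, intervalIntegral_eq_two_smul_of_even sinc_neg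
        (continuous_sinc.intervalIntegrable _ _), smul_eq_mul]
  simp only [h_eq]
  simpa [Function.comp_def, mul_div_cancel₀] using
    (tendsto_integral_sinc_atTop.comp (tendsto_id.atTop_mul_const hx)).const_mul 2

end DirichletIntegral

section Erfc

/-- The complementary error function, normalised by `erfc 0 = 1` and given as `1 - erf` so that it
is a primitive of a Gaussian by construction. -/
noncomputable def erfc (z : ℝ) : ℝ := 1 - 2 / √π * ∫ s in 0..z, exp (-s ^ 2)

theorem erfc_zero : erfc 0 = 1 := by simp [erfc]

theorem hasDerivAt_erfc (z : ℝ) : HasDerivAt erfc (-(2 / √π * exp (-z ^ 2))) z := by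
  have h_cont : Continuous fun s : ℝ => exp (-s ^ 2) := by fun_prop
  exact ((h_cont.integral_hasStrictDerivAt 0 z).hasDerivAt.const_mul _).const_sub 1

theorem contDiff_erfc : ContDiff ℝ (⊤ : ℕ∞) erfc := by
  rw [contDiff_infty_iff_deriv, funext fun z => (hasDerivAt_erfc z).deriv]
  exact ⟨fun z => (hasDerivAt_erfc z).differentiableAt, by fun_prop⟩

theorem tendsto_erfc_atTop : Tendsto erfc atTop (𝓝 0) := by
  have h_gauss : Tendsto (fun z : ℝ => ∫ s in 0..z, exp (-s ^ 2)) atTop (𝓝 (√π / 2)) := by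
    have h_lim := intervalIntegral_tendsto_integral_Ioi 0
      (integrable_exp_neg_mul_sq one_pos).integrableOn tendsto_id
    rw [integral_gaussian_Ioi] at h_lim
    simpa using h_lim
  have h_one : 1 - 2 / √π * (√π / 2) = 0 := by
    field_simp
    norm_num
  exact h_one ▸ (h_gauss.const_mul (2 / √π)).const_sub 1

end Erfc

section HeatStep

/-- The fundamental solution `(4πt)^(-1/2) exp(-x²/(4t))` of the heat equation on the line. -/
noncomputable def heatKernel (x t : ℝ) : ℝ := exp (-x ^ 2 / (4 * t)) / (2 * √(π * t))

/-- The solution of the heat equation on the half-line `x > 0` with zero initial data and boundary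
value `1`. -/
noncomputable def heatStep (x t : ℝ) : ℝ := erfc (x / (2 * √t))

theorem heatStep_zero_left (t : ℝ) : heatStep 0 t = 1 := by
  rw [heatStep, zero_div, erfc_zero]

theorem exp_neg_div_two_mul_sqrt_sq (x : ℝ) {t : ℝ} (ht : 0 < t) :
    exp (-(x / (2 * √t)) ^ 2) = 2 * √π * √t * heatKernel x t := by
  have h_sq : (x / (2 * √t)) ^ 2 = x ^ 2 / (4 * t) := by
    rw [div_pow, mul_pow, sq_sqrt ht.le]
    norm_num
  rw [heatKernel, h_sq, neg_div, sqrt_mul pi_pos.le]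
  field_simp

theorem hasDerivAt_heatStep_left (x : ℝ) {t : ℝ} (ht : 0 < t) :
    HasDerivAt (fun y => heatStep y t) (-2 * heatKernel x t) x := by
  refine ((hasDerivAt_erfc (x / (2 * √t))).comp x
    ((hasDerivAt_id x).div_const (2 * √t))).congr_deriv ?_
  rw [exp_neg_div_two_mul_sqrt_sq x ht]
  field_simp

theorem hasDerivAt_heatKernel_left (x t : ℝ) :
    HasDerivAt (fun y => heatKernel y t) (-(x / (2 * t)) * heatKernel x t) x := by
  refine (((hasDerivAt_pow 2 x).neg.div_const (4 * t)).exp.div_const _).congr_deriv ?_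
  simp only [heatKernel, Pi.neg_apply]
  ring

theorem hasDerivAt_heatStep_right (x : ℝ) {t : ℝ} (ht : 0 < t) :
    HasDerivAt (fun s => heatStep x s) (x / t * heatKernel x t) t := by
  refine ((hasDerivAt_erfc (x / (2 * √t))).comp t ((hasDerivAt_const t x).div
    ((hasDerivAt_sqrt ht.ne').const_mul 2) (by positivity))).congr_deriv ?_
  rw [exp_neg_div_two_mul_sqrt_sq x ht]
  have h_sqrt := sq_sqrt ht.le
  field_simp
  rw [h_sqrt]
  ring

theorem deriv_heatStep_eq_iteratedDeriv_two (x : ℝ) {t : ℝ} (ht : 0 < t) :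
    deriv (fun s => (heatStep x s : ℂ)) t = iteratedDeriv 2 (fun y => (heatStep y t : ℂ)) x := by
  have h_left : deriv (fun y => (heatStep y t : ℂ)) = fun y => ((-2 * heatKernel y t : ℝ) : ℂ) :=
    funext fun y => (hasDerivAt_heatStep_left y ht).ofReal_comp.deriv
  rw [iteratedDeriv_succ, iteratedDeriv_one, h_left,
    ((hasDerivAt_heatKernel_left x t).const_mul (-2)).ofReal_comp.deriv,
    (hasDerivAt_heatStep_right x ht).ofReal_comp.deriv]
  congr 1
  field_simp

theorem contDiffOn_heatStep :
    ContDiffOn ℝ (⊤ : ℕ∞) (fun p : ℝ × ℝ => heatStep p.1 p.2) {p | 0 < p.2} :=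
  contDiff_erfc.comp_contDiffOn (contDiff_fst.contDiffOn.div
    (contDiffOn_const.mul (contDiff_snd.contDiffOn.sqrt fun p (hp : 0 < p.2) => hp.ne'))
    fun _ hp => mul_ne_zero two_ne_zero (sqrt_pos.2 hp).ne')

theorem continuous_heatStep_left (t : ℝ) : Continuous fun x => heatStep x t :=
  contDiff_erfc.continuous.comp (continuous_id.div_const _)

theorem tendsto_heatStep_right_nhdsGT_zero {x : ℝ} (hx : 0 < x) :
    Tendsto (fun t => heatStep x t) (𝓝[>] 0) (𝓝 0) := by
  have h_sqrt : Tendsto (fun t : ℝ => 2 * √t) (𝓝[>] 0) (𝓝[>] 0) := by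
    refine tendsto_nhdsWithin_iff.2 ⟨?_, ?_⟩
    · have h_cont : Continuous fun t : ℝ => 2 * √t := by fun_prop
      simpa using (h_cont.tendsto 0).mono_left nhdsWithin_le_nhds
    · filter_upwards [self_mem_nhdsWithin] with t ht
      exact mul_pos two_pos (sqrt_pos.2 ht)
  exact tendsto_erfc_atTop.comp ((tendsto_inv_nhdsGT_zero.comp h_sqrt).const_mul_atTop hx)

end HeatStep

section FourierRepresentation

theorem integral_cos_mul_exp_neg_mul_sq {t : ℝ} (ht : 0 < t) (y : ℝ) :
    ∫ l : ℝ, cos (l * y) * exp (-t * l ^ 2) = 2 * π * heatKernel y t := by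
  have h_re (l : ℝ) : cos (l * y) * exp (-t * l ^ 2) =
      RCLike.re (Complex.exp (Complex.I * y * l) * Complex.exp (-(t : ℂ) * l ^ 2)) := by
    rw [show Complex.I * y * l = ((l * y : ℝ) : ℂ) * Complex.I by push_cast; ring,
      show -(t : ℂ) * l ^ 2 = ((-t * l ^ 2 : ℝ) : ℂ) by push_cast; ring, ← Complex.ofReal_exp,
      RCLike.re_to_complex, Complex.re_mul_ofReal, Complex.exp_ofReal_mul_I_re]
  have h_int : Integrable fun l : ℝ =>
      Complex.exp (Complex.I * y * l) * Complex.exp (-(t : ℂ) * l ^ 2) := by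
    convert integrable_cexp_quadratic (b := (t : ℂ)) (by simpa using ht) (Complex.I * y) 0 using 2
    rw [← Complex.exp_add]
    ring_nf
  have h_value : (π / t : ℂ) ^ (1 / 2 : ℂ) * Complex.exp (-(y : ℂ) ^ 2 / (4 * t)) =
      ((2 * π * heatKernel y t : ℝ) : ℂ) := by
    have h_const : √(π / t) = 2 * π * (2 * √(π * t))⁻¹ := by
      rw [sqrt_div pi_pos.le, sqrt_mul pi_pos.le]
      field_simp
      exact sq_sqrt pi_pos.le
    rw [heatKernel, div_eq_mul_inv (exp _), mul_comm (exp _), ← mul_assoc, ← h_const, sqrt_eq_rpow]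
    push_cast [Complex.ofReal_cpow (div_nonneg pi_pos.le ht.le)]
    rfl
  simp only [h_re]
  rw [integral_re h_int, fourierIntegral_gaussian (by simpa using ht), h_value]
  exact Complex.ofReal_re _

theorem integral_cos_mul_left (l x : ℝ) : ∫ y in 0..x, cos (l * y) = x * sinc (l * x) := by
  rcases eq_or_ne x 0 with rfl | hx
  · simp
  rcases eq_or_ne l 0 with rfl | hl
  · simp
  rw [sinc_of_ne_zero (mul_ne_zero hl hx), intervalIntegral.integral_comp_mul_left _ hl,
    integral_cos, mul_zero, sin_zero, smul_eq_mul]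
  field_simp
  ring

theorem integrable_mul_exp_neg_mul_sq_of_abs_le {f : ℝ → ℝ} (hf : Continuous f) {C : ℝ}
    (hC : ∀ l, |f l| ≤ C) {t : ℝ} (ht : 0 < t) :
    Integrable fun l : ℝ => f l * exp (-t * l ^ 2) :=
  (integrable_exp_neg_mul_sq ht).bdd_mul hf.aestronglyMeasurable (.of_forall hC)

theorem integral_heatKernel (x : ℝ) {t : ℝ} (ht : 0 < t) :
    ∫ y in 0..x, heatKernel y t = (1 - heatStep x t) / 2 := by
  have h_cont : Continuous fun y => -2 * heatKernel y t := by unfold heatKernel; fun_prop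
  have h_ftc := intervalIntegral.integral_eq_sub_of_hasDerivAt
    (fun y _ => hasDerivAt_heatStep_left y ht) (h_cont.intervalIntegrable 0 x)
  rw [intervalIntegral.integral_const_mul, heatStep_zero_left] at h_ftc
  linarith

theorem integral_mul_sinc_mul_exp_neg_mul_sq (x : ℝ) {t : ℝ} (ht : 0 < t) :
    ∫ l : ℝ, x * sinc (l * x) * exp (-t * l ^ 2) = π * (1 - heatStep x t) := by
  have : IsFiniteMeasure (volume.restrict (uIoc 0 x)) := ⟨by simp [uIoc]⟩
  have h_int : Integrable (fun p : ℝ × ℝ => cos (p.2 * p.1) * exp (-t * p.2 ^ 2))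
      ((volume.restrict (uIoc 0 x)).prod volume) := by
    refine ((integrable_const (1 : ℝ)).mul_prod (integrable_exp_neg_mul_sq ht)).mono'
      (Continuous.aestronglyMeasurable (by fun_prop)) (.of_forall fun p => ?_)
    rw [norm_mul, Real.norm_eq_abs, Real.norm_eq_abs, abs_exp]
    gcongr
    exact abs_cos_le_one _
  calc ∫ l : ℝ, x * sinc (l * x) * exp (-t * l ^ 2)
      = ∫ l : ℝ, ∫ y in 0..x, cos (l * y) * exp (-t * l ^ 2) := by
        simp only [intervalIntegral.integral_mul_const, integral_cos_mul_left]
    _ = ∫ y in 0..x, ∫ l : ℝ, cos (l * y) * exp (-t * l ^ 2) :=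
        (intervalIntegral_integral_swap h_int).symm
    _ = ∫ y in 0..x, 2 * π * heatKernel y t := by
        simp only [integral_cos_mul_exp_neg_mul_sq ht]
    _ = π * (1 - heatStep x t) := by
        rw [intervalIntegral.integral_const_mul, integral_heatKernel x ht]
        ring

theorem tendsto_integral_mul_sinc_mul_exp_sub_one {x t : ℝ} (hx : 0 < x) (ht : 0 < t) :
    Tendsto (fun R : ℝ => ∫ l in -R..R, x * sinc (l * x) * (exp (-t * l ^ 2) - 1)) atTop
      (𝓝 (-(π * heatStep x t))) := by
  have h_gauss : Integrable fun l : ℝ => x * sinc (l * x) * exp (-t * l ^ 2) := by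
    refine integrable_mul_exp_neg_mul_sq_of_abs_le (C := |x|) (by fun_prop) (fun l => ?_) ht
    rw [abs_mul]
    exact mul_le_of_le_one_right (abs_nonneg x) (abs_sinc_le_one _)
  have h_split (R : ℝ) : ∫ l in -R..R, x * sinc (l * x) * (exp (-t * l ^ 2) - 1) =
      (∫ l in -R..R, x * sinc (l * x) * exp (-t * l ^ 2)) - ∫ l in -R..R, x * sinc (l * x) := by
    simp only [mul_sub, mul_one]
    exact intervalIntegral.integral_sub h_gauss.intervalIntegrable
      (Continuous.intervalIntegrable (by fun_prop) _ _)
  have h_lim := (intervalIntegral_tendsto_integral h_gauss tendsto_neg_atTop_atBot tendsto_id).sub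
    (tendsto_integral_mul_sinc_mul_atTop hx)
  rw [integral_mul_sinc_mul_exp_neg_mul_sq x ht] at h_lim
  simp only [h_split]
  simpa only [id, mul_sub, mul_one, sub_sub_cancel_left] using h_lim

theorem continuous_cexp_neg_sq_mul_sub_one_mul_inv (t : ℝ) :
    Continuous fun l : ℝ => (Complex.exp (-(l : ℂ) ^ 2 * t) - 1) * (l : ℂ)⁻¹ := by
  let f : ℝ → ℂ := fun l => Complex.exp (-(l : ℂ) ^ 2 * t)
  have h_diff : Differentiable ℝ f := by fun_prop
  have h_deriv : deriv f 0 = 0 := by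
    have h := ((hasDerivAt_id (0 : ℝ)).ofReal_comp.pow 2).neg.mul_const (t : ℂ) |>.cexp
    simpa [f] using h.deriv
  have h_dslope : (fun l : ℝ => (f l - 1) * (l : ℂ)⁻¹) = dslope f 0 := by
    funext l
    rcases eq_or_ne l 0 with rfl | hl
    · simp [h_deriv]
    · rw [dslope_of_ne f hl, slope_def_module]
      simp [f, mul_comm]
  rw [h_dslope, ← continuousOn_univ, continuousOn_dslope univ_mem]
  exact ⟨h_diff.continuous.continuousOn, h_diff 0⟩

theorem integral_cexp_mul_cexp_sub_one_mul_inv (x t R : ℝ) :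
    ∫ l in -R..R, Complex.exp (Complex.I * (l : ℂ) * (x : ℂ)) *
        (Complex.exp (-(l : ℂ) ^ 2 * (t : ℂ)) - 1) * (l : ℂ)⁻¹ =
      Complex.I * ((∫ l in -R..R, x * sinc (l * x) * (exp (-t * l ^ 2) - 1) : ℝ) : ℂ) := by
  have h_odd : (fun l : ℝ => (Complex.exp (-(l : ℂ) ^ 2 * t) - 1) * (l : ℂ)⁻¹).Odd := fun l => by
    simp [inv_neg]
  have h_sin (l : ℝ) : (sin (l * x) : ℂ) * ((Complex.exp (-(l : ℂ) ^ 2 * t) - 1) * (l : ℂ)⁻¹) =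
      ((x * sinc (l * x) * (exp (-t * l ^ 2) - 1) : ℝ) : ℂ) := by
    rcases eq_or_ne x 0 with rfl | hx
    · simp
    rcases eq_or_ne l 0 with rfl | hl
    · simp
    have hx_cast : (x : ℂ) ≠ 0 := Complex.ofReal_ne_zero.2 hx
    have hl_cast : (l : ℂ) ≠ 0 := Complex.ofReal_ne_zero.2 hl
    rw [sinc_of_ne_zero (mul_ne_zero hl hx)]
    push_cast
    field_simp
  simp only [mul_assoc (Complex.exp _)]
  rw [intervalIntegral_cexp_mul_of_odd h_odd
    ((continuous_cexp_neg_sq_mul_sub_one_mul_inv t).intervalIntegrable _ _)]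
  simp only [h_sin, intervalIntegral.integral_ofReal]

theorem tendsto_integral_cexp_mul_cexp_sub_one_mul_inv {x t : ℝ} (hx : 0 < x) (ht : 0 < t) :
    Tendsto (fun R : ℝ => ∫ l in -R..R, Complex.exp (Complex.I * (l : ℂ) * (x : ℂ)) *
        (Complex.exp (-(l : ℂ) ^ 2 * (t : ℂ)) - 1) * (l : ℂ)⁻¹)
      atTop (𝓝 (Complex.I * ((-(π * heatStep x t) : ℝ) : ℂ))) := by
  simp only [integral_cexp_mul_cexp_sub_one_mul_inv]
  exact (tendsto_integral_mul_sinc_mul_exp_sub_one hx ht).ofReal.const_mul _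

end FourierRepresentation

/-- The function `v(x,t) = (i/π)·lim_{R→∞} ∫_{−R}^{R} e^{iλx}(e^{−λ²t} − 1) λ⁻¹ dλ` is
well defined on `Q` (the symmetric limit exists), is smooth on `Q`, satisfies the heat
equation there, and satisfies `v(0⁺,t) = 1` for `t > 0` and `v(x,0⁺) = 0` for `x > 0`. -/
theorem heat_dirichlet_step_solution :
    ∃ L v : ℝ → ℝ → ℂ,
      (∀ x t : ℝ, 0 < x → 0 < t →
        Tendsto (fun R : ℝ =>
            ∫ l in (-R)..R, Complex.exp (Complex.I * (l : ℂ) * (x : ℂ)) *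
              (Complex.exp (-(l : ℂ) ^ 2 * (t : ℂ)) - 1) * (l : ℂ)⁻¹)
          atTop (nhds (L x t))) ∧
      (∀ x t : ℝ, v x t = Complex.I / (Real.pi : ℂ) * L x t) ∧
      ContDiffOn ℝ (⊤ : ℕ∞) (fun p : ℝ × ℝ => v p.1 p.2) quarterPlane ∧
      (∀ x t : ℝ, 0 < x → 0 < t →
        deriv (fun s => v x s) t = iteratedDeriv 2 (fun y => v y t) x) ∧
      (∀ t : ℝ, 0 < t →
        Tendsto (fun x => v x t) (nhdsWithin 0 (Ioi 0)) (nhds (1 : ℂ))) ∧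
      (∀ x : ℝ, 0 < x →
        Tendsto (fun t => v x t) (nhdsWithin 0 (Ioi 0)) (nhds (0 : ℂ))) := by
  refine ⟨fun x t => Complex.I * ((-(π * heatStep x t) : ℝ) : ℂ), fun x t => (heatStep x t : ℂ),
    fun x t hx ht => tendsto_integral_cexp_mul_cexp_sub_one_mul_inv hx ht, fun x t => ?_,
    Complex.ofRealCLM.contDiff.comp_contDiffOn (contDiffOn_heatStep.mono fun p hp => hp.2),
    fun x t _ ht => deriv_heatStep_eq_iteratedDeriv_two x ht, fun t _ => ?_,
    fun x hx => (tendsto_heatStep_right_nhdsGT_zero hx).ofReal⟩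
  · push_cast
    field_simp
    rw [Complex.I_sq]
    ring
  · have h_cont : Tendsto (fun x => heatStep x t) (𝓝 0) (𝓝 1) := by
      simpa only [heatStep_zero_left] using (continuous_heatStep_left t).tendsto 0
    simpa using (h_cont.mono_left nhdsWithin_le_nhds).ofReal
end
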